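/- Let A be a real n×n matrix with largest singular value σ_max(A) > 1, and let W and Q be real n×n positive semidefinite symmetric matrices. Then for every m ∈ ℕ, the largest eigenvalue of A^m W (Aᵀ)^m + ∑_{i=0}^{m−1} A^i Q (Aᵀ)^i is at most σ_max(A)^{2m}·(λ_max(W) + λ_max(Q)/(σ_max(A)² − 1)), where λ_max denotes the largest eigenvalue of a symmetric matrix. -/

import Mathlib

open Matrix

noncomputable def matEigs {n : ℕ} (M : Matrix (Fin n) (Fin n) ℝ) : Fin n → ℝ := by
  classical exact if h : M.IsHermitian then h.eigenvalues else 0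

noncomputable def matSqrt {n : ℕ} (M : Matrix (Fin n) (Fin n) ℝ) :
    Matrix (Fin n) (Fin n) ℝ := by
  classical exact if h : M.PosSemidef then
    (h.1.eigenvectorUnitary : Matrix (Fin n) (Fin n) ℝ) *
      diagonal (Real.sqrt ∘ h.1.eigenvalues) *
      (star h.1.eigenvectorUnitary : Matrix (Fin n) (Fin n) ℝ) else 0

/-- The natural (Fisher / affine-invariant) distance on positive definite
matrices: `d(P₁,P₂) = (∑ᵢ (log λᵢ)²)^{1/2}` where `λᵢ` are the eigenvalues of
`P₂^{-1/2} P₁ P₂^{-1/2}`. -/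
noncomputable def natDist {n : ℕ} (P₁ P₂ : Matrix (Fin n) (Fin n) ℝ) : ℝ :=
  Real.sqrt (∑ i : Fin n,
    Real.log (matEigs ((matSqrt P₂)⁻¹ * P₁ * (matSqrt P₂)⁻¹) i) ^ 2)

/-- The largest eigenvalue of a (Hermitian) matrix. -/
noncomputable def lambdaMax {n : ℕ} [NeZero n] (M : Matrix (Fin n) (Fin n) ℝ) : ℝ :=
  Finset.univ.sup' Finset.univ_nonempty (matEigs M)

/-- The largest singular value of a real square matrix, `σ_max(A) = √λ_max(AᵀA)`. -/
noncomputable def sigmaMax {n : ℕ} [NeZero n] (A : Matrix (Fin n) (Fin n) ℝ) : ℝ :=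
  Real.sqrt (lambdaMax (Aᵀ * A))

/-!
In the Loewner order, `λ_max(M) ≤ c` means `M ≤ c • 1`. Conjugation `X ↦ A X Aᵀ` is monotone and
`A Aᵀ ≤ σ_max(A)² • 1`, because `A Aᵀ` and `Aᵀ A` have the same spectrum; hence `P ≤ c • 1` with
`0 ≤ c` propagates to `Aᵏ P (Aᵀ)ᵏ ≤ c σ_max(A)²ᵏ • 1`. Summing gives a geometric series of ratio
`σ_max(A)² > 1`, dominated by `σ_max(A)²ᵐ / (σ_max(A)² - 1)`.
-/

open scoped MatrixOrder

section StarOrderedRing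

variable {S R : Type*} [CommSemiring S] [PartialOrder S] [IsOrderedRing S]
  [Semiring R] [StarRing R] [PartialOrder R] [StarOrderedRing R]
  [Algebra S R] [PosSMulMono S R]

theorem pow_mul_mul_star_pow_le_smul_one {a p : R} {s c : S} (ha : a * star a ≤ s • (1 : R))
    (hs : 0 ≤ s) (hp : p ≤ c • (1 : R)) (hc : 0 ≤ c) (k : ℕ) :
    a ^ k * p * star a ^ k ≤ (c * s ^ k) • (1 : R) := by
  induction k with
  | zero => simpa using hp
  | succ k ih =>
    calc a ^ (k + 1) * p * star a ^ (k + 1)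
        = a * (a ^ k * p * star a ^ k) * star a := by
          rw [pow_succ' a, pow_succ (star a)]; simp only [mul_assoc]
      _ ≤ a * ((c * s ^ k) • (1 : R)) * star a := star_right_conjugate_le_conjugate ih a
      _ = (c * s ^ k) • (a * star a) := by rw [mul_smul_one, smul_mul_assoc]
      _ ≤ (c * s ^ k) • s • (1 : R) :=
          smul_le_smul_of_nonneg_left ha (mul_nonneg hc (pow_nonneg hs k))
      _ = (c * s ^ (k + 1)) • (1 : R) := by rw [smul_smul, pow_succ, mul_assoc]

end StarOrderedRing

theorem geom_sum_le_pow_div_sub_one {K : Type*} [Field K] [LinearOrder K] [IsStrictOrderedRing K]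
    {s : K} (hs : 1 < s) (m : ℕ) : ∑ i ∈ Finset.range m, s ^ i ≤ s ^ m / (s - 1) := by
  rw [geom_sum_eq hs.ne']
  exact div_le_div_of_nonneg_right (sub_le_self _ zero_le_one) (sub_nonneg.2 hs.le)

theorem isHermitian_pow_mul_mul_transpose_pow {ι α : Type*} [Fintype ι] [DecidableEq ι]
    [CommSemiring α] [StarRing α] [TrivialStar α] (A : Matrix ι ι α) {P : Matrix ι ι α}
    (hP : P.IsHermitian) (k : ℕ) : (A ^ k * P * Aᵀ ^ k).IsHermitian := by
  simpa only [conjTranspose_eq_transpose_of_trivial, transpose_pow] using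
    isHermitian_mul_mul_conjTranspose (A ^ k) hP

section LargestEigenvalue

variable {n : ℕ} {M : Matrix (Fin n) (Fin n) ℝ}

theorem range_matEigs (hM : M.IsHermitian) : Set.range (matEigs M) = spectrum ℝ M := by
  rw [matEigs, dif_pos hM, hM.spectrum_real_eq_range_eigenvalues]

variable [NeZero n]

theorem lambdaMax_isGreatest_spectrum (hM : M.IsHermitian) :
    IsGreatest (spectrum ℝ M) (lambdaMax M) := by
  obtain ⟨i, -, hi⟩ := Finset.exists_mem_eq_sup' Finset.univ_nonempty (matEigs M)
  rw [← range_matEigs hM]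
  exact ⟨⟨i, hi.symm⟩, Set.forall_mem_range.2 fun j => Finset.le_sup' _ (Finset.mem_univ j)⟩

theorem lambdaMax_le_iff_le_smul_one (hM : M.IsHermitian) {c : ℝ} :
    lambdaMax M ≤ c ↔ M ≤ c • (1 : Matrix (Fin n) (Fin n) ℝ) := by
  rw [isLUB_le_iff (lambdaMax_isGreatest_spectrum hM).isLUB, ← Algebra.algebraMap_eq_smul_one,
    le_algebraMap_iff_spectrum_le (ha := hM.isSelfAdjoint), mem_upperBounds]

theorem le_lambdaMax_smul_one (hM : M.IsHermitian) :
    M ≤ lambdaMax M • (1 : Matrix (Fin n) (Fin n) ℝ) :=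
  (lambdaMax_le_iff_le_smul_one hM).1 le_rfl

theorem lambdaMax_nonneg (hM : M.PosSemidef) : 0 ≤ lambdaMax M :=
  spectrum_nonneg_of_nonneg hM.nonneg (lambdaMax_isGreatest_spectrum hM.isHermitian).1

theorem lambdaMax_mul_comm {A B : Matrix (Fin n) (Fin n) ℝ} (hAB : (A * B).IsHermitian)
    (hBA : (B * A).IsHermitian) : lambdaMax (A * B) = lambdaMax (B * A) := by
  have spectrum_comm : spectrum ℝ (A * B) = spectrum ℝ (B * A) := by
    ext μ
    simp only [mem_spectrum_iff_isRoot_charpoly, charpoly_mul_comm A]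
  exact (spectrum_comm ▸ lambdaMax_isGreatest_spectrum hAB).unique
    (lambdaMax_isGreatest_spectrum hBA)

theorem sigmaMax_sq (A : Matrix (Fin n) (Fin n) ℝ) : sigmaMax A ^ 2 = lambdaMax (Aᵀ * A) :=
  Real.sq_sqrt (lambdaMax_nonneg (posSemidef_conjTranspose_mul_self A))

theorem mul_transpose_le_sigmaMax_sq_smul_one (A : Matrix (Fin n) (Fin n) ℝ) :
    A * Aᵀ ≤ sigmaMax A ^ 2 • (1 : Matrix (Fin n) (Fin n) ℝ) := by
  have hAAt : (A * Aᵀ).IsHermitian := isHermitian_mul_conjTranspose_self A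
  have hAtA : (Aᵀ * A).IsHermitian := isHermitian_conjTranspose_mul_self A
  rw [sigmaMax_sq, lambdaMax_mul_comm hAtA hAAt]
  exact le_lambdaMax_smul_one hAAt

end LargestEigenvalue

section Bound

variable {n : ℕ} [NeZero n] (A : Matrix (Fin n) (Fin n) ℝ) {P W Q : Matrix (Fin n) (Fin n) ℝ}

theorem pow_mul_mul_transpose_pow_le_smul_one (hP : P.IsHermitian) (hP₀ : 0 ≤ lambdaMax P)
    (k : ℕ) :
    A ^ k * P * Aᵀ ^ k ≤
      (lambdaMax P * (sigmaMax A ^ 2) ^ k) • (1 : Matrix (Fin n) (Fin n) ℝ) :=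
  pow_mul_mul_star_pow_le_smul_one (mul_transpose_le_sigmaMax_sq_smul_one A) (sq_nonneg _)
    (le_lambdaMax_smul_one hP) hP₀ k

theorem lambdaMax_pow_conj_add_sum_le (hW : W.IsHermitian) (hQ : Q.IsHermitian)
    (hW₀ : 0 ≤ lambdaMax W) (hQ₀ : 0 ≤ lambdaMax Q) (m : ℕ) :
    lambdaMax (A ^ m * W * Aᵀ ^ m + ∑ i ∈ Finset.range m, A ^ i * Q * Aᵀ ^ i) ≤
      lambdaMax W * (sigmaMax A ^ 2) ^ m +
        lambdaMax Q * ∑ i ∈ Finset.range m, (sigmaMax A ^ 2) ^ i := by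
  have hermitian : (A ^ m * W * Aᵀ ^ m + ∑ i ∈ Finset.range m, A ^ i * Q * Aᵀ ^ i).IsHermitian :=
    (isHermitian_pow_mul_mul_transpose_pow A hW m).add <|
      isSelfAdjoint_sum _ fun i _ => isHermitian_pow_mul_mul_transpose_pow A hQ i
  rw [lambdaMax_le_iff_le_smul_one hermitian, add_smul, Finset.mul_sum, Finset.sum_smul]
  exact add_le_add (pow_mul_mul_transpose_pow_le_smul_one A hW hW₀ m) <|
    Finset.sum_le_sum fun i _ => pow_mul_mul_transpose_pow_le_smul_one A hQ hQ₀ i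

theorem lambdaMax_pessimist_bound_general (hW : W.IsHermitian) (hQ : Q.IsHermitian)
    (hW₀ : 0 ≤ lambdaMax W) (hQ₀ : 0 ≤ lambdaMax Q) (hA : 1 < sigmaMax A) (m : ℕ) :
    lambdaMax (A ^ m * W * Aᵀ ^ m + ∑ i ∈ Finset.range m, A ^ i * Q * Aᵀ ^ i)
      ≤ sigmaMax A ^ (2 * m) * (lambdaMax W + lambdaMax Q / (sigmaMax A ^ 2 - 1)) := by
  set s := sigmaMax A ^ 2
  have hs : 1 < s := one_lt_pow₀ hA two_ne_zero
  calc lambdaMax (A ^ m * W * Aᵀ ^ m + ∑ i ∈ Finset.range m, A ^ i * Q * Aᵀ ^ i)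
      ≤ lambdaMax W * s ^ m + lambdaMax Q * ∑ i ∈ Finset.range m, s ^ i :=
        lambdaMax_pow_conj_add_sum_le A hW hQ hW₀ hQ₀ m
    _ ≤ lambdaMax W * s ^ m + lambdaMax Q * (s ^ m / (s - 1)) := by
        gcongr
        exact geom_sum_le_pow_div_sub_one hs m
    _ = sigmaMax A ^ (2 * m) * (lambdaMax W + lambdaMax Q / (s - 1)) := by
        rw [pow_mul]; ring

end Bound

/-- If `σ_max(A) > 1` and `W`, `Q` are positive semidefinite,
then for every `m`,
`λ_max(Aᵐ W (Aᵀ)ᵐ + ∑_{i<m} Aⁱ Q (Aᵀ)ⁱ) ≤ σ_max(A)^{2m}·(λ_max(W) + λ_max(Q)/(σ_max(A)² − 1))`. -/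
theorem lambdaMax_pessimist_bound
    {n : ℕ} [NeZero n] (A W Q : Matrix (Fin n) (Fin n) ℝ)
    (hW : W.PosSemidef) (hQ : Q.PosSemidef) (hA : 1 < sigmaMax A) (m : ℕ) :
    lambdaMax (A ^ m * W * Aᵀ ^ m + ∑ i ∈ Finset.range m, A ^ i * Q * Aᵀ ^ i)
      ≤ sigmaMax A ^ (2 * m) * (lambdaMax W + lambdaMax Q / (sigmaMax A ^ 2 - 1)) := by
  exact lambdaMax_pessimist_bound_general A hW.isHermitian hQ.isHermitian
    (lambdaMax_nonneg hW) (lambdaMax_nonneg hQ) hA m
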